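/- Let q be a real number with 0 < q and q ≠ 1, let h₁, h₂, l₁, α₁, λ be real numbers and t₁, t₂ nonzero reals. Assume λ + α₁ = -N for some positive integer N (so (q^{λ+α₁};q)_n = 0 for all n > N and the series below is a finite sum), and assume q^{h₁-l₁+k} ≠ 1 for all integers 1 ≤ k ≤ N. Then the function g(x) = x^{-α₁} · Σ_{n=0}^{N} (q^{h₁+1/2}t₁/x;q)_n · (q^{λ+α₁};q)_n · q^n · Σ_{k=0}^{n} q^{k²} · (q^{λ+α₁+h₁-h₂}·t₁/t₂)^k / ((q^{h₁-l₁+1};q)_k (q;q)_k (q;q)_{n-k}) satisfies the variant of the confluent q-hypergeometric equation of type (1,2) for all x > 0. -/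

import Mathlib

/-- The finite q-shifted factorial `(a;q)_n = ∏_{i=0}^{n-1} (1 - a q^i)`. -/
noncomputable def qPoch (q a : ℝ) (n : ℕ) : ℝ :=
  ∏ i ∈ Finset.range n, (1 - a * q ^ i)

/-- The variant of the confluent q-hypergeometric equation of type (1,2) (for `x > 0`). -/
def confEq12 (q h₁ h₂ l₁ α₁ lam t₁ t₂ : ℝ) (g : ℝ → ℝ) : Prop :=
  ∀ x : ℝ, 0 < x →
    q ^ (h₁ + h₂ - l₁ - 2 * lam + 1/2) * t₂ * (q ^ (l₁ - 1/2) * t₁ - x) * g (q * x)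
    + (x - q ^ (h₁ + 1/2) * t₁) * (x - q ^ (h₂ + 1/2) * t₂) * g (x / q)
    - (q ^ α₁ * x ^ 2
        - q ^ (h₁ + h₂ - lam + 1/2) * (q ^ (-h₂) * t₁ + q ^ (-h₁) * t₂ + q ^ (-l₁) * t₂) * x
        + q ^ (h₁ + h₂ - lam) * (q + 1) * t₁ * t₂) * g x = 0

/-!
Put `y = q^{h₁+1/2} t₁ / x`, `c = q^{λ+α₁}`, `γ = q^{h₁-l₁+1}` and `z = c q^{h₁-h₂} t₁ / t₂`. For
`g(x) = x^{-α₁} F(y)` the equation becomes `L F = 0`, where `L` is a `q`-difference operator that is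
tridiagonal from the basis `(y;q)_n` to `y (y;q)_n`. Hence `L` kills `∑ b_n (y;q)_n` as soon as `b`
satisfies the transposed three-term recurrence. For `b_n = (c;q)_n q^n a_n` this is the recurrence
of the normalised `q`-Laguerre polynomials `a_n`, multiplied by `(c;q)_{n+2}`; this factor vanishes
for `n + 2 > N`, so the recurrence survives past the range in which the `a_n` are well defined.
-/

open Finset

theorem sum_range_smul_of_tridiagonal {R M : Type*} [CommRing R] [AddCommGroup M] [Module R M]
    {p r s b : ℕ → R} {φ ψ : ℕ → M}
    (hψ₀ : ψ 0 = r 0 • φ 0 + s 0 • φ 1)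
    (hψ : ∀ n, ψ (n + 1) = p (n + 1) • φ n + r (n + 1) • φ (n + 1) + s (n + 1) • φ (n + 2))
    (hb₀ : r 0 * b 0 + p 1 * b 1 = 0)
    (hb : ∀ n, s n * b n + r (n + 1) * b (n + 1) + p (n + 2) * b (n + 2) = 0) (n : ℕ) :
    ∑ i ∈ range (n + 1), b i • ψ i = (s n * b n) • φ (n + 1) - (p (n + 1) * b (n + 1)) • φ n := by
  induction n with
  | zero =>
    rw [sum_range_one, hψ₀]
    linear_combination (norm := module) hb₀ • φ 0
  | succ n ih =>
    rw [sum_range_succ, ih, hψ]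
    linear_combination (norm := module) hb n • φ (n + 1)

section qPoch

variable (q a : ℝ) (n : ℕ)

theorem qPoch_zero : qPoch q a 0 = 1 := prod_range_zero _

theorem qPoch_succ : qPoch q a (n + 1) = qPoch q a n * (1 - a * q ^ n) := prod_range_succ _ _

theorem qPoch_succ' : qPoch q a (n + 1) = (1 - a) * qPoch q (a * q) n := by
  simp only [qPoch, prod_range_succ', pow_zero, mul_one, pow_succ', mul_assoc, mul_comm (1 - a)]

variable {q a n}

theorem qPoch_eq_zero_of_mul_pow_eq_one {N : ℕ} (ha : a * q ^ N = 1) (hn : N < n) :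
    qPoch q a n = 0 :=
  prod_eq_zero (mem_range.2 hn) (sub_eq_zero.2 ha.symm)

theorem one_sub_pow_succ_ne_zero (hq : |q| ≠ 1) (n : ℕ) : 1 - q ^ (n + 1) ≠ 0 := fun h =>
  hq <| (pow_eq_one_iff_of_nonneg (abs_nonneg q) n.succ_ne_zero).1 <| by
    rw [← abs_pow, ← sub_eq_zero.1 h, abs_one]

theorem one_sub_pow_succ_div_qPoch_self (hq : |q| ≠ 1) (n : ℕ) :
    (1 - q ^ (n + 1)) / qPoch q q (n + 1) = 1 / qPoch q q n := by
  rw [qPoch_succ, ← pow_succ', ← div_div, div_right_comm,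
    div_self (one_sub_pow_succ_ne_zero hq n)]

theorem sum_antidiagonal_succ_mul_one_sub_pow_div_qPoch (hq : |q| ≠ 1) (f : ℕ → ℕ → ℝ) (n : ℕ) :
    ∑ p ∈ antidiagonal (n + 1), f p.1 p.2 * ((1 - q ^ p.2) / qPoch q q p.2) =
      ∑ p ∈ antidiagonal n, f p.1 (p.2 + 1) / qPoch q q p.2 := by
  simp only [Nat.sum_antidiagonal_succ', pow_zero, sub_self, zero_div, mul_zero, zero_add,
    one_sub_pow_succ_div_qPoch_self hq, mul_one_div]

end qPoch

section qLaguerre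

/-- The `k`-th term of the explicit series of a `q`-Laguerre polynomial, without the factor
`1 / (q;q)_{n-k}`, which is the only one that depends on the degree `n`. -/
noncomputable def qLaguerreTerm (q γ z : ℝ) (k : ℕ) : ℝ :=
  q ^ k ^ 2 * z ^ k / (qPoch q γ k * qPoch q q k)

/-- The `q`-Laguerre polynomial `L_n^{(a)}(-z q / γ; q)` divided by `(γ;q)_n`, where `γ = q^{a+1}`.
Summing over the antidiagonal avoids the truncated subtraction `n - k`. -/
noncomputable def normQLaguerre (q γ z : ℝ) (n : ℕ) : ℝ :=
  ∑ p ∈ antidiagonal n, qLaguerreTerm q γ z p.1 / qPoch q q p.2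

variable {q γ : ℝ} (z : ℝ) {n : ℕ}

theorem normQLaguerre_eq_sum_range (q γ z : ℝ) (n : ℕ) :
    normQLaguerre q γ z n = ∑ k ∈ range (n + 1),
      q ^ ((k : ℝ) ^ 2) * z ^ k / (qPoch q γ k * qPoch q q k * qPoch q q (n - k)) := by
  rw [normQLaguerre, Nat.sum_antidiagonal_eq_sum_range_succ
    fun k m => qLaguerreTerm q γ z k / qPoch q q m]
  refine sum_congr rfl fun k _ => ?_
  rw [qLaguerreTerm, div_div, ← Nat.cast_pow, Real.rpow_natCast]

theorem qLaguerreTerm_succ (hq : |q| ≠ 1) (hγ : 1 - γ * q ^ n ≠ 0) :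
    (1 - q ^ (n + 1)) * (1 - γ * q ^ n) * qLaguerreTerm q γ z (n + 1) =
      z * q ^ (2 * n + 1) * qLaguerreTerm q γ z n := by
  have hq' := one_sub_pow_succ_ne_zero hq n
  have hdiv : (1 - q ^ (n + 1)) * (1 - γ * q ^ n) *
      (qPoch q γ n * (1 - γ * q ^ n) * (qPoch q q n * (1 - q ^ (n + 1))))⁻¹ =
        (qPoch q γ n * qPoch q q n)⁻¹ := by
    field_simp
  rw [qLaguerreTerm, qLaguerreTerm, qPoch_succ, qPoch_succ, ← pow_succ', div_eq_mul_inv,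
    div_eq_mul_inv, ← hdiv]
  ring

theorem normQLaguerre_zero (q γ : ℝ) : normQLaguerre q γ z 0 = 1 := by
  simp [normQLaguerre, qLaguerreTerm, qPoch_zero]

theorem mul_normQLaguerre_eq_sum_antidiagonal_succ (hq : |q| ≠ 1)
    (hγ : ∀ k < n + 1, 1 - γ * q ^ k ≠ 0) :
    q * (z * q ^ (2 * n + 1)) * normQLaguerre q γ z n =
      ∑ p ∈ antidiagonal (n + 1), (q ^ p.2) ^ 2 * (1 - q ^ p.1) * (q - γ * q ^ p.1) *
        (qLaguerreTerm q γ z p.1 / qPoch q q p.2) := by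
  rw [Nat.sum_antidiagonal_succ, pow_zero, sub_self, mul_zero, zero_mul, zero_mul, zero_add,
    normQLaguerre, mul_sum]
  refine sum_congr rfl fun ⟨k, m⟩ hkm => ?_
  obtain rfl : k + m = n := mem_antidiagonal.1 hkm
  linear_combination (-q * (q ^ m) ^ 2 / qPoch q q m) *
    qLaguerreTerm_succ z hq (hγ k (by omega))

theorem normQLaguerre_recurrence_antidiagonal (hq₀ : q ≠ 0) (hq : |q| ≠ 1)
    (hγ : ∀ k < n + 1, 1 - γ * q ^ k ≠ 0) :
    (1 - q ^ (n + 1)) * (1 - γ * q ^ n) * normQLaguerre q γ z (n + 1) =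
      (1 + q - (q + γ) * q ^ n + z * q ^ (2 * n + 1)) * normQLaguerre q γ z n -
        q * ∑ p ∈ antidiagonal n, qLaguerreTerm q γ z p.1 * ((1 - q ^ p.2) / qPoch q q p.2) := by
  have hshift := sum_antidiagonal_succ_mul_one_sub_pow_div_qPoch hq
    (fun k _ => qLaguerreTerm q γ z k) n
  have hshift' := sum_antidiagonal_succ_mul_one_sub_pow_div_qPoch hq
    (fun k m => qLaguerreTerm q γ z k * (q - q ^ m)) n
  have hmul := mul_normQLaguerre_eq_sum_antidiagonal_succ z hq hγ
  have hprev : ∑ p ∈ antidiagonal n,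
      qLaguerreTerm q γ z p.1 * (q - q ^ (p.2 + 1)) / qPoch q q p.2 =
      q * ∑ p ∈ antidiagonal n, qLaguerreTerm q γ z p.1 * ((1 - q ^ p.2) / qPoch q q p.2) := by
    rw [mul_sum]
    exact sum_congr rfl fun p _ => by ring
  -- Multiplying by `q` turns the factor `1 - γ q^(k-1)` of the `k`-th term into `q - γ q^k`.
  refine mul_left_cancel₀ hq₀ ?_
  calc q * ((1 - q ^ (n + 1)) * (1 - γ * q ^ n) * normQLaguerre q γ z (n + 1))
    _ = (1 - q ^ (n + 1)) * (q - γ * q ^ (n + 1)) * normQLaguerre q γ z (n + 1) := by ring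
    _ = (q * (1 + q) - (q + γ) * q ^ (n + 1)) * (∑ p ∈ antidiagonal (n + 1),
            qLaguerreTerm q γ z p.1 * ((1 - q ^ p.2) / qPoch q q p.2)) +
          (∑ p ∈ antidiagonal (n + 1), (q ^ p.2) ^ 2 * (1 - q ^ p.1) * (q - γ * q ^ p.1) *
            (qLaguerreTerm q γ z p.1 / qPoch q q p.2)) -
          q * ∑ p ∈ antidiagonal (n + 1),
            qLaguerreTerm q γ z p.1 * (q - q ^ p.2) * ((1 - q ^ p.2) / qPoch q q p.2) := by
      simp only [normQLaguerre, mul_sum, ← sum_add_distrib, ← sum_sub_distrib]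
      refine sum_congr rfl fun p hp => ?_
      rw [← mem_antidiagonal.1 hp, pow_add]
      ring
    _ = q * ((1 + q - (q + γ) * q ^ n + z * q ^ (2 * n + 1)) * normQLaguerre q γ z n -
          q * ∑ p ∈ antidiagonal n,
            qLaguerreTerm q γ z p.1 * ((1 - q ^ p.2) / qPoch q q p.2)) := by
      rw [hshift', hshift, ← hmul, ← normQLaguerre, hprev]
      ring

theorem normQLaguerre_one (hq₀ : q ≠ 0) (hq : |q| ≠ 1) (hγ : 1 - γ ≠ 0) :
    (1 - q) * (1 - γ) * normQLaguerre q γ z 1 = 1 - γ + z * q := by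
  have h := normQLaguerre_recurrence_antidiagonal (n := 0) z hq₀ hq (by simpa using hγ)
  simp only [normQLaguerre_zero, Nat.antidiagonal_zero, sum_singleton, pow_zero, sub_self, zero_div,
    mul_zero, sub_zero, mul_one, zero_add, pow_one] at h
  linear_combination h

theorem normQLaguerre_recurrence (hq₀ : q ≠ 0) (hq : |q| ≠ 1)
    (hγ : ∀ k < n + 2, 1 - γ * q ^ k ≠ 0) :
    (1 - q ^ (n + 2)) * (1 - γ * q ^ (n + 1)) * normQLaguerre q γ z (n + 2) =
      (1 + q - (q + γ) * q ^ (n + 1) + z * q ^ (2 * n + 3)) * normQLaguerre q γ z (n + 1) -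
        q * normQLaguerre q γ z n := by
  rw [normQLaguerre_recurrence_antidiagonal z hq₀ hq hγ,
    sum_antidiagonal_succ_mul_one_sub_pow_div_qPoch hq fun k _ => qLaguerreTerm q γ z k]
  rfl

end qLaguerre

section confOp

/-- The `q`-difference operator to which the confluent equation reduces after the substitution
`g(x) = x^{-α₁} F(q^{h₁+1/2} t₁ / x)`, with `γ = q^{h₁-l₁+1}`, `z = q^{λ+α₁+h₁-h₂} t₁ / t₂` and
`c = q^{λ+α₁}`; denominators have been cleared. -/
noncomputable def confOp (q γ z c : ℝ) : (ℝ → ℝ) →ₗ[ℝ] ℝ → ℝ where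
  toFun F y := y * (y - γ) * F (y / q) + c * q * (1 - y) * (z - c * y) * F (y * q) -
    (c * q * z - (q * z + q * c + γ * c) * y + (q + 1) * c * y ^ 2) * F y
  map_add' F G := by
    ext y
    simp only [Pi.add_apply]
    ring
  map_smul' k F := by
    ext y
    simp only [Pi.smul_apply, smul_eq_mul, RingHom.id_apply]
    ring

theorem confOp_apply (q γ z c : ℝ) (F : ℝ → ℝ) (y : ℝ) :
    confOp q γ z c F y =
      y * (y - γ) * F (y / q) + c * q * (1 - y) * (z - c * y) * F (y * q) -
        (c * q * z - (q * z + q * c + γ * c) * y + (q + 1) * c * y ^ 2) * F y := rfl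

theorem confEq12_of_confOp_eq_zero {q h₁ h₂ l₁ α₁ lam t₁ t₂ : ℝ} (hq : 0 < q) (ht₁ : t₁ ≠ 0)
    (ht₂ : t₂ ≠ 0) {F : ℝ → ℝ}
    (hF : confOp q (q ^ (h₁ - l₁ + 1)) (q ^ (lam + α₁ + h₁ - h₂) * t₁ / t₂) (q ^ (lam + α₁)) F =
      0) :
    confEq12 q h₁ h₂ l₁ α₁ lam t₁ t₂ fun x => x ^ (-α₁) * F (q ^ (h₁ + 1/2) * t₁ / x) := by
  intro x hx
  have h := congrFun hF (q ^ (h₁ + 1/2) * t₁ / x)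
  have hdiv : q ^ (h₁ + 1/2) * t₁ / (q * x) = q ^ (h₁ + 1/2) * t₁ / x / q := by field_simp
  have hmul : q ^ (h₁ + 1/2) * t₁ / (x / q) = q ^ (h₁ + 1/2) * t₁ / x * q := by field_simp
  obtain ⟨s, hs, rfl⟩ : ∃ s, 0 < s ∧ q = s ^ 2 :=
    ⟨√q, Real.sqrt_pos.2 hq, (Real.sq_sqrt hq.le).symm⟩
  have hsqrt : (s ^ 2) ^ (1/2 : ℝ) = s := by rw [← Real.sqrt_eq_rpow, Real.sqrt_sq hs.le]
  rw [confOp_apply, ← hdiv, ← hmul, Pi.zero_apply] at h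
  simp only [Real.rpow_add hq, Real.rpow_sub hq, Real.rpow_neg hq.le, two_mul, Real.rpow_one, hsqrt,
    Real.mul_rpow hq.le hx.le, Real.div_rpow hx.le hq.le] at h ⊢
  -- The multiplier is `q ^ α₁ * x ^ (2 - α₁) / (c * q * z)` in the notation of `confOp`.
  linear_combination (norm := skip) (s ^ 2) ^ α₁ * (x ^ 2 * x ^ (-α₁)) /
    ((s ^ 2) ^ lam * (s ^ 2) ^ α₁ * s ^ 2 *
      ((s ^ 2) ^ lam * (s ^ 2) ^ α₁ * (s ^ 2) ^ h₁ / (s ^ 2) ^ h₂ * t₁ / t₂)) * h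
  field_simp
  ring

/-- The coefficient of `y (y;q)_{n-1}` in `confOp` applied to `(y;q)_n`, at `u = q^n`. -/
noncomputable def lowerCoeff (q γ u : ℝ) : ℝ := (u - 1) * (q - γ * u) / u ^ 2

/-- The coefficient of `y (y;q)_n` in `confOp` applied to `(y;q)_n`, at `u = q^n`. -/
noncomputable def diagCoeff (q γ z c u : ℝ) : ℝ :=
  (1 - c * u) * (q * z * u ^ 2 - (q + γ) * u + q + 1) / u ^ 2

/-- The coefficient of `y (y;q)_{n+1}` in `confOp` applied to `(y;q)_n`, at `u = q^n`. -/
noncomputable def upperCoeff (q c u : ℝ) : ℝ := -((1 - c * u) * (1 - c * q * u)) / u ^ 2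

/-- The coefficient of `(y;q)_n` in the series solution of `confOp q γ z c F = 0`. -/
noncomputable def confCoeff (q γ z c : ℝ) (n : ℕ) : ℝ :=
  qPoch q c n * q ^ n * normQLaguerre q γ z n

variable {q γ : ℝ} (z c : ℝ)

theorem confOp_qPoch_zero (q γ z c : ℝ) :
    confOp q γ z c (qPoch q · 0) =
      diagCoeff q γ z c 1 • (fun y => y * qPoch q y 0) +
        upperCoeff q c 1 • fun y => y * qPoch q y 1 := by
  ext y
  simp only [confOp_apply, diagCoeff, upperCoeff, Pi.add_apply, Pi.smul_apply, smul_eq_mul,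
    qPoch_succ, qPoch_zero]
  ring

theorem confOp_qPoch_succ (hq₀ : q ≠ 0) (γ z c : ℝ) (n : ℕ) :
    confOp q γ z c (qPoch q · (n + 1)) =
      lowerCoeff q γ (q ^ (n + 1)) • (fun y => y * qPoch q y n) +
        diagCoeff q γ z c (q ^ (n + 1)) • (fun y => y * qPoch q y (n + 1)) +
        upperCoeff q c (q ^ (n + 1)) • fun y => y * qPoch q y (n + 2) := by
  ext y
  have hdown : qPoch q (y / q) (n + 1) = (1 - y / q) * qPoch q y n := by
    rw [qPoch_succ', div_mul_cancel₀ _ hq₀]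
  have hup : (1 - y) * qPoch q (y * q) (n + 1) =
      qPoch q y n * (1 - y * q ^ n) * (1 - y * q ^ (n + 1)) := by
    rw [← qPoch_succ', qPoch_succ, qPoch_succ]
  simp only [confOp_apply, lowerCoeff, diagCoeff, upperCoeff, Pi.add_apply, Pi.smul_apply,
    smul_eq_mul, hdown, qPoch_succ q y]
  linear_combination (norm := skip) c * q * (z - c * y) * hup
  field_simp
  ring

theorem confCoeff_recurrence_zero (hq₀ : q ≠ 0) (hq : |q| ≠ 1) (h : c = 1 ∨ γ ≠ 1) :
    diagCoeff q γ z c 1 * confCoeff q γ z c 0 + lowerCoeff q γ q * confCoeff q γ z c 1 = 0 := by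
  simp only [diagCoeff, lowerCoeff, confCoeff, normQLaguerre_zero, qPoch_succ, qPoch_zero]
  rcases h with rfl | hγ
  · simp
  · have hrec := normQLaguerre_one z hq₀ hq (sub_ne_zero.2 hγ.symm)
    linear_combination (norm := skip) (c - 1) * hrec
    field_simp
    ring

theorem confCoeff_recurrence (hq₀ : q ≠ 0) (hq : |q| ≠ 1) {n : ℕ}
    (h : qPoch q c (n + 2) = 0 ∨ ∀ k < n + 2, 1 - γ * q ^ k ≠ 0) :
    upperCoeff q c (q ^ n) * confCoeff q γ z c n +
        diagCoeff q γ z c (q ^ (n + 1)) * confCoeff q γ z c (n + 1) +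
        lowerCoeff q γ (q ^ (n + 2)) * confCoeff q γ z c (n + 2) = 0 := by
  have hresidual : upperCoeff q c (q ^ n) * confCoeff q γ z c n +
      diagCoeff q γ z c (q ^ (n + 1)) * confCoeff q γ z c (n + 1) +
      lowerCoeff q γ (q ^ (n + 2)) * confCoeff q γ z c (n + 2) =
        qPoch q c (n + 2) / q ^ (n + 1) *
          ((1 + q - (q + γ) * q ^ (n + 1) + z * q ^ (2 * n + 3)) * normQLaguerre q γ z (n + 1) -
            q * normQLaguerre q γ z n -
            (1 - q ^ (n + 2)) * (1 - γ * q ^ (n + 1)) * normQLaguerre q γ z (n + 2)) := by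
    simp only [upperCoeff, diagCoeff, lowerCoeff, confCoeff, qPoch_succ]
    field_simp
    ring
  rw [hresidual]
  rcases h with hc | hγ
  · rw [hc, zero_div, zero_mul]
  · rw [normQLaguerre_recurrence z hq₀ hq hγ, sub_self, mul_zero]

theorem confOp_sum_confCoeff_eq_zero (hq₀ : q ≠ 0) (hq : |q| ≠ 1) {N : ℕ} (hc : c * q ^ N = 1)
    (hγ : ∀ k < N, 1 - γ * q ^ k ≠ 0) :
    confOp q γ z c (∑ n ∈ range (N + 1), confCoeff q γ z c n • (qPoch q · n)) = 0 := by
  have hzero : c = 1 ∨ γ ≠ 1 := by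
    rcases N.eq_zero_or_pos with rfl | hN
    · exact .inl (by simpa using hc)
    · exact .inr fun h => hγ 0 hN (by simp [h])
  have hsucc (n : ℕ) : qPoch q c (n + 2) = 0 ∨ ∀ k < n + 2, 1 - γ * q ^ k ≠ 0 := by
    rcases lt_or_ge N (n + 2) with hN | hN
    · exact .inl (qPoch_eq_zero_of_mul_pow_eq_one hc hN)
    · exact .inr fun k hk => hγ k (hk.trans_le hN)
  have hupper : upperCoeff q c (q ^ N) = 0 := by simp [upperCoeff, hc]
  have hlast : confCoeff q γ z c (N + 1) = 0 := by
    simp [confCoeff, qPoch_eq_zero_of_mul_pow_eq_one hc N.lt_succ_self]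
  simp only [map_sum, map_smul]
  rw [sum_range_smul_of_tridiagonal (p := fun n => lowerCoeff q γ (q ^ n))
    (r := fun n => diagCoeff q γ z c (q ^ n)) (s := fun n => upperCoeff q c (q ^ n))
    (φ := fun n y => y * qPoch q y n) (ψ := fun n => confOp q γ z c (qPoch q · n))
    (by simpa using confOp_qPoch_zero q γ z c) (confOp_qPoch_succ hq₀ γ z c)
    (by simpa using confCoeff_recurrence_zero z c hq₀ hq hzero)
    (fun n => confCoeff_recurrence z c hq₀ hq (hsucc n)), hupper, hlast]
  simp

end confOp

theorem stmt4 (q h₁ h₂ l₁ α₁ lam t₁ t₂ : ℝ) (N : ℕ)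
    (hq : 0 < q) (hq1 : q ≠ 1) (ht₁ : t₁ ≠ 0) (ht₂ : t₂ ≠ 0)
    (hN : 0 < N) (hNlam : lam + α₁ = -(N : ℝ))
    (hden : ∀ k : ℕ, 1 ≤ k → k ≤ N → q ^ (h₁ - l₁ + (k : ℝ)) ≠ 1) :
    confEq12 q h₁ h₂ l₁ α₁ lam t₁ t₂ (fun x =>
      x ^ (-α₁) * ∑ n ∈ Finset.range (N + 1),
        qPoch q (q ^ (h₁ + 1/2) * t₁ / x) n * qPoch q (q ^ (lam + α₁)) n * q ^ n *
          ∑ k ∈ Finset.range (n + 1),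
            q ^ ((k : ℝ) ^ 2) * (q ^ (lam + α₁ + h₁ - h₂) * t₁ / t₂) ^ k /
              (qPoch q (q ^ (h₁ - l₁ + 1)) k * qPoch q q k * qPoch q q (n - k))) := by
  have habs : |q| ≠ 1 := by rwa [abs_of_pos hq]
  have hc : q ^ (lam + α₁) * q ^ N = 1 := by
    rw [← Real.rpow_natCast, ← Real.rpow_add hq, hNlam, neg_add_cancel, Real.rpow_zero]
  have hγ : ∀ k < N, 1 - q ^ (h₁ - l₁ + 1) * q ^ k ≠ 0 := fun k hk => by
    rw [← Real.rpow_natCast, ← Real.rpow_add hq, add_assoc, add_comm 1, ← Nat.cast_succ]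
    exact sub_ne_zero.2 (hden (k + 1) k.succ_pos hk).symm
  have hsol := confEq12_of_confOp_eq_zero hq ht₁ ht₂
    (confOp_sum_confCoeff_eq_zero (q ^ (lam + α₁ + h₁ - h₂) * t₁ / t₂) _ hq.ne' habs hc hγ)
  convert hsol using 5 with x
  simp only [Finset.sum_apply, Pi.smul_apply, smul_eq_mul, confCoeff, normQLaguerre_eq_sum_range]
  exact sum_congr rfl fun n _ => by ring
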